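/- arXiv:2507.14070 — 7 statements merged into one kernel-verified Lean document; each statement's English description precedes it below -/
import Mathlib

section
/- Let b, t, γ be positive integers with 2t < b. Let F be a finite set and let f : Σ_2^b → F be a one-burst-t-deletion syndrome function. Fix σ_0, σ_1 ∈ F and for c ∈ {0,1} define S^(c) = {s ∈ Σ_2^b : f(s) = σ_c, s_1 = c, s_{t+1} ≠ s_{2t}, s_{b−t+1} = s_b}. Let C ⊆ Σ_2^{bγ} be the set of all concatenations x_1 x_2 ⋯ x_γ such that x_1 ∈ S^(0) and, for each i ∈ [2,γ], x_i ∈ S^(1) if the last bit of x_{i−1} equals 0 and x_i ∈ S^(0) if the last bit of x_{i−1} equals 1. Then C is a segmented burst-of-t-deletions error-correcting code: for any two distinct x, x′ ∈ C, B^D_{γ,t}(x) ∩ B^D_{γ,t}(x′) = ∅. -/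
/-- The one-burst-`t`-deletion ball `B_t^D(x)`: all sequences obtained from `x` by
deleting `t` consecutive symbols. -/
def burstDelBall {q : ℕ} (t : ℕ) (x : List (Fin q)) : Set (List (Fin q)) :=
  {y | ∃ i, i + t ≤ x.length ∧ y = x.take i ++ x.drop (i + t)}

/-- The `i`-th (0-indexed) segment of length `b` of `x`. -/
def seg {q : ℕ} (b : ℕ) (x : List (Fin q)) (i : ℕ) : List (Fin q) :=
  (x.drop (i * b)).take b

/-- The segmented burst-deletion ball `B^D_{γ,t}(x)`: concatenations `z_1 ⋯ z_γ`
where each `z_i` is either the `i`-th segment of `x` or obtained from it by one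
burst of `t` deletions. -/
def segBall {q : ℕ} (b t γ : ℕ) (x : List (Fin q)) : Set (List (Fin q)) :=
  {y | ∃ z : Fin γ → List (Fin q),
      (∀ i : Fin γ, z i = seg b x i ∨ z i ∈ burstDelBall t (seg b x i)) ∧
      y = (List.ofFn z).flatten}

/-- `f` is a one-burst-`t`-deletion syndrome function on length-`b` sequences. -/
def IsSyndrome {q : ℕ} (b t : ℕ) {F : Type*} (f : List (Fin q) → F) : Prop :=
  ∀ u v : List (Fin q), u.length = b → v.length = b → u ≠ v → f u = f v →
    burstDelBall t u ∩ burstDelBall t v = ∅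

/-- The segment sets. -/
def CodeSeg (b t : ℕ) {F : Type*} (f : List (Fin 2) → F) (σ : Fin 2 → F) (c : Fin 2) :
    Set (List (Fin 2)) :=
  {s | s.length = b ∧ f s = σ c ∧ s[0]? = some c ∧
          s[t]? ≠ s[2 * t - 1]? ∧ s[b - t]? = s[b - 1]?}

/-- Chained segment lists. -/
def Chained (S : Fin 2 → Set (List (Fin 2))) : Fin 2 → List (List (Fin 2)) → Prop
  | _, [] => True
  | c, u :: L => u ∈ S c ∧ ∀ d, u.getLast? = some d → Chained S (1 - d) L

/-- The relation between received and sent segments. -/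
def Rcv (t : ℕ) (z u : List (Fin 2)) : Prop := z = u ∨ z ∈ burstDelBall t u

theorem ball_length {t : ℕ} {z u : List (Fin 2)} (h : z ∈ burstDelBall t u) :
    z.length + t = u.length := by
  obtain ⟨i, hi, rfl⟩ := h
  simp
  omega

theorem fin2_ne (d : Fin 2) : 1 - d ≠ d := by
  revert d; decide

theorem key_false {b t : ℕ} (ht : 0 < t) (h2t : 2 * t < b) {F : Type*}
    {f : List (Fin 2) → F} (hf : IsSyndrome b t f) {σ : Fin 2 → F} {c : Fin 2}
    {u u' z' : List (Fin 2)} {zs' us' : List (List (Fin 2))} {w : List (Fin 2)}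
    (hu : u ∈ CodeSeg b t f σ c) (hu' : u' ∈ CodeSeg b t f σ c)
    (hz' : z' ∈ burstDelBall t u')
    (hch : ∀ d, u'.getLast? = some d → Chained (CodeSeg b t f σ) (1 - d) us')
    (hR : List.Forall₂ (Rcv t) zs' us')
    (heq : u ++ w = z' ++ zs'.flatten) : False := by
  have hl' := ball_length hz'
  obtain ⟨hul, huf, hu0, hut, hub⟩ := hu
  obtain ⟨hul', huf', -, -, -⟩ := hu'
  have hz'l : z'.length = b - t := by omega
  have h1 : z' = u.take (b - t) := by
    have := congrArg (List.take (b - t)) heq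
    rw [List.take_append_of_le_length (by omega), List.take_append_of_le_length (by omega)] at this
    rw [this, ← hz'l, List.take_length]
  have h2 : u = u' := by
    by_contra hne
    have h := hf u u' hul hul' hne (huf.trans huf'.symm)
    have : z' ∈ burstDelBall t u ∩ burstDelBall t u' :=
      ⟨⟨b - t, by omega, by rw [h1, List.drop_of_length_le (by omega), List.append_nil]⟩, hz'⟩
    rw [h] at this
    exact this
  subst h2
  obtain ⟨d, hd⟩ : ∃ d, u[b - 1]? = some d := ⟨u[b-1], by simp⟩
  have hlast : u.getLast? = some d := by rw [List.getLast?_eq_getElem?, hul, hd]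
  have hc := hch d hlast
  have hw : ∀ k, k < t → zs'.flatten[k]? = u[b - t + k]? := by
    intro k hk
    have := congrArg (fun l => l[b - t + k]?) heq
    rw [List.getElem?_append_left (by omega), List.getElem?_append_right (by omega)] at this
    rw [this, hz'l]; congr 1; omega
  have hw0 : zs'.flatten[0]? = some d := by rw [hw 0 ht, ← hd, ← hub]; rfl
  have hw1 : zs'.flatten[t - 1]? = some d := by
    rw [hw _ (by omega), ← hd]; congr 1; omega
  cases hR with
  | nil => simp at hw0
  | @cons z v zs vs hzv hrest =>
    obtain ⟨⟨hvl, -, hv0, hvt, -⟩, -⟩ := hc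
    have hzl : t < z.length := by
      rcases hzv with rfl | h
      · omega
      · have := ball_length h; omega
    rw [List.flatten_cons, List.getElem?_append_left (by omega)] at hw0 hw1
    rcases hzv with rfl | ⟨i, hi, rfl⟩
    · rw [hv0] at hw0
      exact fin2_ne d (by simpa using hw0)
    · rcases Nat.eq_zero_or_pos i with rfl | hi0
      · simp only [List.take_zero, List.nil_append, List.getElem?_drop] at hw0 hw1
        apply hvt
        have e1 : 0 + t + 0 = t := by omega
        have e2 : 0 + t + (t - 1) = 2 * t - 1 := by omega
        rw [e1] at hw0
        rw [e2] at hw1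
        rw [hw0, hw1]
      · rw [List.getElem?_append_left (by simp; omega), List.getElem?_take_of_lt hi0, hv0] at hw0
        exact fin2_ne d (by simpa using hw0)

theorem decode {b t : ℕ} (ht : 0 < t) (h2t : 2 * t < b) {F : Type*}
    {f : List (Fin 2) → F} (hf : IsSyndrome b t f) {σ : Fin 2 → F} :
    ∀ (us us' zs zs' : List (List (Fin 2))) (c : Fin 2),
      Chained (CodeSeg b t f σ) c us → Chained (CodeSeg b t f σ) c us' →
      List.Forall₂ (Rcv t) zs us → List.Forall₂ (Rcv t) zs' us' →
      us.length = us'.length → zs.flatten = zs'.flatten → us = us' := by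
  intro us
  induction us with
  | nil =>
    intro us' zs zs' c _ _ _ _ hl _
    exact (List.length_eq_zero_iff.1 hl.symm).symm
  | cons u us ih =>
    intro us' zs zs' c h1 h2 r1 r2 hl he
    cases us' with
    | nil => simp at hl
    | cons u' us' =>
    cases r1 with
    | @cons z _ zs _ a1 r1 =>
    cases r2 with
    | @cons z' _ zs' _ a2 r2 =>
    obtain ⟨m1, c1⟩ := h1
    obtain ⟨m2, c2⟩ := h2
    simp only [List.flatten_cons] at he
    have main : u = u' ∧ z.length = z'.length := by
      rcases a1 with rfl | b1 <;> rcases a2 with rfl | b2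
      · have hl2 : z.length = z'.length := m1.1.trans m2.1.symm
        exact ⟨(List.append_inj he hl2).1, hl2⟩
      · exact (key_false ht h2t hf m1 m2 b2 c2 r2 he).elim
      · exact (key_false ht h2t hf m2 m1 b1 c1 r1 he.symm).elim
      · have l1 := ball_length b1
        have l2 := ball_length b2
        have hl2 : z.length = z'.length := by have := m1.1; have := m2.1; omega
        refine ⟨?_, hl2⟩
        by_contra hne
        have h := hf u u' m1.1 m2.1 hne (m1.2.1.trans m2.2.1.symm)
        have : z ∈ burstDelBall t u ∩ burstDelBall t u' :=
          ⟨b1, by rw [(List.append_inj he hl2).1]; exact b2⟩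
        rw [h] at this
        exact this
    obtain ⟨rfl, hzl⟩ := main
    have hpos : u ≠ [] := by
      rintro rfl
      have := m1.1
      simp at this
      omega
    have hd := List.getLast?_eq_some_getLast hpos
    rw [ih us' zs zs' _ (c1 _ hd) (c2 _ hd) r1 r2 (by simpa using hl) (List.append_inj he hzl).2]

theorem chained_ofFn (S : Fin 2 → Set (List (Fin 2))) : ∀ (n : ℕ) (z : Fin n → List (Fin 2))
    (c : Fin 2), (∀ h : 0 < n, z ⟨0, h⟩ ∈ S c) →
    (∀ i : Fin n, 0 < i.val → ∀ c : Fin 2,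
            (z ⟨i.val - 1, Nat.lt_of_le_of_lt (Nat.pred_le _) i.isLt⟩).getLast?
              = some c → z i ∈ S (1 - c)) → Chained S c (List.ofFn z) := by
  intro n
  induction n with
  | zero => intro z c _ _; simp [Chained]
  | succ n ih =>
    intro z c h0 h
    rw [List.ofFn_succ]
    refine ⟨h0 (Nat.succ_pos n), fun d hd => ih _ _ ?_ ?_⟩
    · intro hn
      exact h (Fin.succ ⟨0, hn⟩) (Nat.succ_pos _) d hd
    · intro i hi e he
      refine h i.succ (Nat.succ_pos _) e ?_
      rw [← he]
      congr 2
      ext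
      simp
      omega

theorem chained_length {b t : ℕ} (ht : 0 < t) (h2t : 2 * t < b) {F : Type*}
    {f : List (Fin 2) → F} {σ : Fin 2 → F} : ∀ (us : List (List (Fin 2))) (c : Fin 2),
    Chained (CodeSeg b t f σ) c us → ∀ u ∈ us, u.length = b := by
  intro us
  induction us with
  | nil => simp
  | cons v us ih =>
    rintro c ⟨m, h⟩ u hu
    rcases List.mem_cons.1 hu with rfl | hu
    · exact m.1
    · have hpos : v ≠ [] := by
        rintro rfl
        have := m.1
        simp at this
        omega
      exact ih _ (h _ (List.getLast?_eq_some_getLast hpos)) u hu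

theorem seg_flatten {b : ℕ} : ∀ (us : List (List (Fin 2))), (∀ u ∈ us, u.length = b) →
    ∀ i (hi : i < us.length), seg b us.flatten i = us[i] := by
  intro us
  induction us with
  | nil => intro _ i hi; simp at hi
  | cons u us ih =>
    intro h i hi
    have hu : u.length = b := h u (by simp)
    cases i with
    | zero => simp [seg, ← hu]
    | succ i =>
      have := ih (fun v hv => h v (by simp [hv])) i (by simpa using hi)
      rw [List.getElem_cons_succ, ← this]
      unfold seg
      rw [List.flatten_cons, List.drop_append, List.drop_of_length_le (by rw [hu]; nlinarith)]
      simp only [List.nil_append]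
      congr 2
      rw [hu, Nat.succ_mul]; omega

theorem rcv_of {b t γ : ℕ} {z zz : Fin γ → List (Fin 2)}
    (hl : ∀ u ∈ List.ofFn z, u.length = b)
    (h : ∀ i : Fin γ, zz i = seg b (List.ofFn z).flatten i ∨
      zz i ∈ burstDelBall t (seg b (List.ofFn z).flatten i)) :
    List.Forall₂ (Rcv t) (List.ofFn zz) (List.ofFn z) := by
  rw [List.forall₂_iff_get]
  refine ⟨by simp, fun i h1 h2 => ?_⟩
  have hi : i < γ := by simpa using h1
  have := h ⟨i, hi⟩
  rw [seg_flatten _ hl i h2] at this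
  simpa [Rcv] using this

/-- the binary segmented code built from a one-burst-`t`-deletion
syndrome function with fixed first bit and the boundary constraints is a
segmented burst-of-`t`-deletions error-correcting code. -/
theorem stmt0 (b t γ : ℕ) (hb : 0 < b) (ht : 0 < t) (hγ : 0 < γ)
    (h2t : 2 * t < b) (F : Type*) [Fintype F]
    (f : List (Fin 2) → F) (hf : IsSyndrome b t f) (σ : Fin 2 → F) :
    ∀ S : Fin 2 → Set (List (Fin 2)),
      S = (fun c => {s | s.length = b ∧ f s = σ c ∧ s[0]? = some c ∧
          s[t]? ≠ s[2 * t - 1]? ∧ s[b - t]? = s[b - 1]?}) →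
    ∀ C : Set (List (Fin 2)),
      C = {x | ∃ z : Fin γ → List (Fin 2),
          x = (List.ofFn z).flatten ∧
          z ⟨0, hγ⟩ ∈ S 0 ∧
          ∀ i : Fin γ, 0 < i.val → ∀ c : Fin 2,
            (z ⟨i.val - 1, Nat.lt_of_le_of_lt (Nat.pred_le _) i.isLt⟩).getLast?
              = some c →
            z i ∈ S (1 - c)} →
    ∀ x ∈ C, ∀ x' ∈ C, x ≠ x' →
      segBall b t γ x ∩ segBall b t γ x' = ∅ := by
  intro S hS C hC x hx x' hx' hne
  have hS' : S = CodeSeg b t f σ := hS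
  clear hS
  subst hS' hC
  obtain ⟨z, rfl, h0, h⟩ := hx
  obtain ⟨z', rfl, h0', h'⟩ := hx'
  have k := chained_ofFn _ γ z 0 (fun _ => h0) h
  have k' := chained_ofFn _ γ z' 0 (fun _ => h0') h'
  rw [Set.eq_empty_iff_forall_notMem]
  rintro y ⟨⟨zz, hz, rfl⟩, ⟨zz', hz', he⟩⟩
  apply hne
  rw [decode ht h2t hf _ _ _ _ 0 k k' (rcv_of (chained_length ht h2t _ _ k) hz)
    (rcv_of (chained_length ht h2t _ _ k') hz') (by simp) he]
end

section
/- Let q > 2 and let b, t, γ be positive integers with 2t < b. Let F be a finite set and let f : Σ_q^b → F be a one-burst-t-deletion syndrome function. Fix σ_0, σ_1, …, σ_{q−1} ∈ F and for each j ∈ {0,…,q−1} define S^(j) = {s ∈ Σ_q^b : f(s) = σ_j, s_1 ≠ j, s_{t+1} ≠ j, s_{2t} ≠ j, s_{b−t+1} = s_b}. Let C ⊆ Σ_q^{bγ} be the set of all concatenations x_1 x_2 ⋯ x_γ such that x_1 ∈ S^(0) and, for each i ∈ [2,γ], x_i ∈ S^(j) where j is the last symbol of x_{i−1}. Then C is a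 segmented burst-of-t-deletions error-correcting code: for any two distinct x, x′ ∈ C, B^D_{γ,t}(x) ∩ B^D_{γ,t}(x′) = ∅. -/
theorem take_mem_aux {q : ℕ} (b t : ℕ) (h : 2 * t < b) (u w r : List (Fin q)) (hu : u.length = b)
    (hw : w = u ∨ w ∈ burstDelBall t u) : (w ++ r).take (b - t) ∈ burstDelBall t u := by
  rcases hw with rfl | ⟨i, hi, rfl⟩
  · refine ⟨b - t, by omega, ?_⟩
    rw [List.take_append_of_le_length (by omega), List.drop_eq_nil_of_le (by omega),
      List.append_nil]
  · refine ⟨i, hi, ?_⟩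
    apply List.take_left'
    simp
    omega

theorem len_aux {q : ℕ} (b t : ℕ) (u w : List (Fin q)) (hu : u.length = b)
    (hw : w ∈ burstDelBall t u) : w.length = b - t := by
  obtain ⟨i, hi, rfl⟩ := hw
  simp
  omega

theorem head_aux {q : ℕ} (b t : ℕ) (h : 2 * t < b) (u w r : List (Fin q)) (j : Fin q)
    (hu : u.length = b) (h0 : u[0]? ≠ some j) (h1 : u[t]? ≠ some j)
    (hw : w = u ∨ w ∈ burstDelBall t u) : (w ++ r)[0]? ≠ some j := by
  have hl : 0 < w.length := by
    rcases hw with rfl | hw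
    · omega
    · rw [len_aux b t u w hu hw]; omega
  rw [List.getElem?_append_left hl]
  rcases hw with rfl | ⟨i, hi, rfl⟩
  · exact h0
  · rcases Nat.eq_zero_or_pos i with rfl | hi0
    · simpa using h1
    · rw [List.getElem?_append_left (by simp; omega), List.getElem?_take_of_lt hi0]
      exact h0

theorem shift_aux {q : ℕ} (b t : ℕ) (ht : 0 < t) (h : 2 * t < b) (u w r r' : List (Fin q))
    (hu : u.length = b) (he : u[b - t]? = u[b - 1]?)
    (hw : w ∈ burstDelBall t u) (heq : u ++ r = w ++ r') : r'[0]? = u[b - 1]? := by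
  have hl := len_aux b t u w hu hw
  have := congrArg (fun l => l[b - t]?) heq
  rw [List.getElem?_append_left (by omega), List.getElem?_append_right (by omega), hl,
    Nat.sub_self] at this
  rw [← this, he]

theorem key_aux {q b t : ℕ} (ht : 0 < t) (h2t : 2 * t < b) {F : Type*}
    (f : List (Fin q) → F) (hf : IsSyndrome b t f) (σ : Fin q → F)
    (S : Fin q → Set (List (Fin q)))
    (hS : S = (fun j => {s | s.length = b ∧ f s = σ j ∧ s[0]? ≠ some j ∧
          s[t]? ≠ some j ∧ s[2 * t - 1]? ≠ some j ∧ s[b - t]? = s[b - 1]?})) (n : ℕ) :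
    ∀ (j : Fin q) (z z' w w' : Fin n → List (Fin q)),
      (∀ h : 0 < n, z ⟨0, h⟩ ∈ S j) → (∀ h : 0 < n, z' ⟨0, h⟩ ∈ S j) →
      (∀ i i' : Fin n, i.val + 1 = i'.val → ∀ k, (z i).getLast? = some k → z i' ∈ S k) →
      (∀ i i' : Fin n, i.val + 1 = i'.val → ∀ k, (z' i).getLast? = some k → z' i' ∈ S k) →
      (∀ i, w i = z i ∨ w i ∈ burstDelBall t (z i)) →
      (∀ i, w' i = z' i ∨ w' i ∈ burstDelBall t (z' i)) →
      (List.ofFn w).flatten = (List.ofFn w').flatten → z = z' := by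
  induction n with
  | zero => intros; exact Subsingleton.elim _ _
  | succ n ih =>
    intro j z z' w w' hz hz' hc hc' hw hw' heq
    have h0 := hz (Nat.succ_pos n)
    have h0' := hz' (Nat.succ_pos n)
    rw [List.ofFn_succ, List.ofFn_succ, List.flatten_cons, List.flatten_cons] at heq
    have e0 : (⟨0, Nat.succ_pos n⟩ : Fin (n+1)) = 0 := rfl
    rw [e0] at h0 h0'
    have g0 := h0
    have g0' := h0'
    rw [hS] at h0 h0'
    obtain ⟨hl, hσ, -, -, -, hend⟩ := h0
    obtain ⟨hl', hσ', -, -, -, -⟩ := h0'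
    have huu : z 0 = z' 0 := by
      by_contra hne
      have := hf _ _ hl hl' hne (hσ.trans hσ'.symm)
      have m1 := take_mem_aux b t h2t (z 0) (w 0) (List.ofFn fun i => w i.succ).flatten hl (hw 0)
      have m2 := take_mem_aux b t h2t (z' 0) (w' 0) (List.ofFn fun i => w' i.succ).flatten hl'
        (hw' 0)
      rw [← heq] at m2
      have m3 := Set.mem_inter m1 m2
      rw [this] at m3
      exact m3
    obtain ⟨k, hk⟩ : ∃ k, (z 0).getLast? = some k := by
      rw [List.getLast?_eq_getElem?]
      exact ⟨_, List.getElem?_eq_getElem (by omega)⟩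
    have hk1 : (z 0)[b - 1]? = some k := by
      rw [← hk, List.getLast?_eq_getElem?, hl]
    -- the tail never begins with the symbol k
    have tail : ∀ (y v : Fin (n+1) → List (Fin q)),
        (∀ i i' : Fin (n+1), i.val + 1 = i'.val → ∀ k, (y i).getLast? = some k → y i' ∈ S k) →
        (y 0).getLast? = some k → (∀ i, v i = y i ∨ v i ∈ burstDelBall t (y i)) →
        (List.ofFn fun i : Fin n => v i.succ).flatten[0]? ≠ some k := by
      intro y v hy hyk hv
      cases n with
      | zero => simp
      | succ m =>
        rw [List.ofFn_succ, List.flatten_cons]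
        have := hy 0 (Fin.succ 0) (by simp) k hyk
        rw [hS] at this
        obtain ⟨a1, -, a2, a3, -, -⟩ := this
        exact head_aux b t h2t _ _ _ k a1 a2 a3 (hv _)
    have T := tail z w hc hk hw
    have T' := tail z' w' hc' (huu ▸ hk) hw'
    have hlen : (w 0).length = (w' 0).length := by
      rcases hw 0 with a | a <;> rcases hw' 0 with a' | a'
      · rw [a, a', hl, hl']
      · rw [a] at heq
        rw [← huu] at a'
        exact absurd ((shift_aux b t ht h2t _ _ _ _ hl hend a' heq).trans hk1) T'
      · rw [a', ← huu] at heq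
        exact absurd ((shift_aux b t ht h2t _ _ _ _ hl hend a heq.symm).trans hk1) T
      · rw [len_aux b t _ _ hl a, len_aux b t _ _ hl' a']
    have hr := (List.append_inj heq hlen).2
    have := ih k (fun i => z i.succ) (fun i => z' i.succ) (fun i => w i.succ) (fun i => w' i.succ)
      (fun h => hc 0 _ (by simp) k hk) (fun h => hc' 0 _ (by simp) k (huu ▸ hk))
      (fun i i' h => hc i.succ i'.succ (by simp [h])) (fun i i' h => hc' i.succ i'.succ (by simp [h]))
      (fun i => hw _) (fun i => hw' _) hr
    funext i
    refine Fin.cases huu (fun i => congrFun this i) i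

theorem seg_aux {q b : ℕ} (n : ℕ) : ∀ (z : Fin n → List (Fin q)), (∀ i, (z i).length = b) →
    ∀ i : Fin n, seg b (List.ofFn z).flatten i = z i := by
  induction n with
  | zero => intro z _ i; exact i.elim0
  | succ n ih =>
    intro z hz i
    rw [List.ofFn_succ, List.flatten_cons]
    refine Fin.cases ?_ (fun i => ?_) i
    · simp [seg, ← hz 0]
    · rw [← ih (fun i => z i.succ) (fun i => hz _) i]
      unfold seg
      have : (i.succ : Fin (n+1)).val * b = (z 0).length + i.val * b := by
        rw [hz, Fin.val_succ]; ring
      rw [this, List.drop_append, List.drop_eq_nil_of_le (by omega)]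
      simp

/-- the `q`-ary (`q > 2`) segmented code built from a one-burst-`t`-
deletion syndrome function is a segmented burst-of-`t`-deletions ECC. -/
theorem stmt2 (q b t γ : ℕ) (hq : 2 < q) (hb : 0 < b) (ht : 0 < t) (hγ : 0 < γ)
    (h2t : 2 * t < b) (F : Type*) [Fintype F]
    (f : List (Fin q) → F) (hf : IsSyndrome b t f) (σ : Fin q → F) :
    ∀ S : Fin q → Set (List (Fin q)),
      S = (fun j => {s | s.length = b ∧ f s = σ j ∧ s[0]? ≠ some j ∧
          s[t]? ≠ some j ∧ s[2 * t - 1]? ≠ some j ∧ s[b - t]? = s[b - 1]?}) →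
    ∀ C : Set (List (Fin q)),
      C = {x | ∃ z : Fin γ → List (Fin q),
          x = (List.ofFn z).flatten ∧
          z ⟨0, hγ⟩ ∈ S ⟨0, by omega⟩ ∧
          ∀ i : Fin γ, 0 < i.val → ∀ j : Fin q,
            (z ⟨i.val - 1, Nat.lt_of_le_of_lt (Nat.pred_le _) i.isLt⟩).getLast?
              = some j →
            z i ∈ S j} →
    ∀ x ∈ C, ∀ x' ∈ C, x ≠ x' →
      segBall b t γ x ∩ segBall b t γ x' = ∅ := by
  intro S hS C hC x hx x' hx' hne
  rw [hC] at hx hx'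
  obtain ⟨z, rfl, hz0, hzc⟩ := hx
  obtain ⟨z', rfl, hz0', hzc'⟩ := hx'
  have hlen : ∀ y : Fin γ → List (Fin q), y ⟨0, hγ⟩ ∈ S ⟨0, by omega⟩ →
      (∀ i : Fin γ, 0 < i.val → ∀ j : Fin q,
        (y ⟨i.val - 1, Nat.lt_of_le_of_lt (Nat.pred_le _) i.isLt⟩).getLast? = some j →
          y i ∈ S j) → ∀ i, (y i).length = b := by
    intro y h0 hc
    have hSl : ∀ j s, s ∈ S j → s.length = b := by
      intro j s hs
      rw [hS] at hs
      exact hs.1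
    rintro ⟨i, hi⟩
    induction i with
    | zero => exact hSl _ _ h0
    | succ i ih =>
      have := ih (by omega)
      obtain ⟨k, hk⟩ : ∃ k, (y ⟨i, by omega⟩).getLast? = some k := by
        rw [List.getLast?_eq_getElem?]
        exact ⟨_, List.getElem?_eq_getElem (by omega)⟩
      exact hSl k _ (hc ⟨i + 1, hi⟩ (Nat.succ_pos i) k hk)
  have chain : ∀ y : Fin γ → List (Fin q),
      (∀ i : Fin γ, 0 < i.val → ∀ j : Fin q,
        (y ⟨i.val - 1, Nat.lt_of_le_of_lt (Nat.pred_le _) i.isLt⟩).getLast? = some j →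
          y i ∈ S j) →
      (∀ i i' : Fin γ, i.val + 1 = i'.val → ∀ k, (y i).getLast? = some k → y i' ∈ S k) := by
    intro y hc i i' h k hk
    apply hc i' (by omega) k
    have : (⟨i'.val - 1, Nat.lt_of_le_of_lt (Nat.pred_le _) i'.isLt⟩ : Fin γ) = i :=
      Fin.ext (by simp; omega)
    rw [this]; exact hk
  rw [Set.eq_empty_iff_forall_notMem]
  rintro y ⟨⟨w, hw, rfl⟩, ⟨w', hw', heq⟩⟩
  apply hne
  have : z = z' := by
    refine key_aux ht h2t f hf σ S hS γ ⟨0, by omega⟩ z z' w w' (fun _ => hz0) (fun _ => hz0')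
      (chain z hzc) (chain z' hzc') ?_ ?_ heq
    · intro i
      have := hw i
      rwa [seg_aux γ z (hlen z hz0 hzc)] at this
    · intro i
      have := hw' i
      rwa [seg_aux γ z' (hlen z' hz0' hzc')] at this
  rw [this]
end

section
/- Let q > 2 and let b, t, γ be positive integers with t ≥ 2 and 3t ≤ b. Let F be a nonempty finite set and let f : Σ_q^b → F be a one-burst-t-deletion syndrome function. Then there exist σ_0, σ_1, …, σ_{q−1} ∈ F such that the code C ⊆ Σ_q^{bγ} consisting of all concatenations x_1 x_2 ⋯ x_γ with x_1 ∈ S^(0) and, for i ∈ [2,γ], x_i ∈ S^(j) where j is the last symbol of x_{i−1} (here S^(j) = {s ∈ Σ_q^b : f(s) = σ_j, s_1 ≠ j, s_{t+1} ≠ j, s_{2t} ≠ j, s_{b−t+1} = s_b}), is a segmented burst-of-t-deletions error-correcting code of size |C| ≥ (q^{b−4}(q−1)^3/|F|)^γ. -/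
namespace Stmt3Aux

open Finset

variable {q : ℕ}

/-- last symbol of a word, with default -/
def lastD (d : Fin q) (s : List (Fin q)) : Fin q := s.getLast?.getD d

/-- the code of `n` segments, started with symbol `j` -/
def codeSet (d : Fin q) (T : Fin q → Finset (List (Fin q))) : ℕ → Fin q → Finset (List (Fin q))
  | 0, _ => {[]}
  | n + 1, j => (T j).biUnion (fun s => (codeSet d T n (lastD d s)).image (fun r => s ++ r))

/-- chain condition -/
def Chain (T : Fin q → Finset (List (Fin q))) (n : ℕ) (j : Fin q)
    (z : Fin n → List (Fin q)) : Prop :=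
  ∀ i : Fin n, ∀ k : Fin q,
    (if h : i.val = 0 then k = j else (z ⟨i.val - 1, by omega⟩).getLast? = some k) → z i ∈ T k

/-- joint transmission relation -/
def Rel (b t : ℕ) (d : Fin q) (T : Fin q → Finset (List (Fin q))) :
    ℕ → Fin q → List (Fin q) → List (Fin q) → Prop
  | 0, _, x, y => x = [] ∧ y = []
  | n + 1, j, x, y => ∃ s z x2 y2, s ∈ T j ∧ (z = s ∨ z ∈ burstDelBall t s) ∧
      Rel b t d T n (lastD d s) x2 y2 ∧ x = s ++ x2 ∧ y = z ++ y2

theorem getLast?_eq (d : Fin q) {b : ℕ} (hb : 0 < b) {s : List (Fin q)} (hs : s.length = b) :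
    s.getLast? = some (lastD d s) := by
  unfold lastD
  cases h : s.getLast? with
  | none => rw [List.getLast?_eq_none_iff] at h; subst h; simp at hs; omega
  | some a => simp

theorem chain_succ (d : Fin q) {b : ℕ} (hb : 0 < b) (T : Fin q → Finset (List (Fin q)))
    (hT : ∀ j, ∀ s ∈ T j, s.length = b) (n : ℕ) (j : Fin q) (z : Fin (n + 1) → List (Fin q)) :
    Chain T (n + 1) j z ↔ z 0 ∈ T j ∧ Chain T n (lastD d (z 0)) (fun i => z i.succ) := by
  constructor
  · intro h
    have h0 : z 0 ∈ T j := h 0 j (by simp)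
    refine ⟨h0, ?_⟩
    have hl := getLast?_eq d hb (hT _ _ h0)
    intro i k hk
    apply h i.succ k
    rw [dif_neg (by simp)]
    by_cases hi : i.val = 0
    · rw [dif_pos hi] at hk
      subst hk
      rw [← hl]
      congr 2
      ext; simp [hi]
    · rw [dif_neg hi] at hk
      rw [← hk]
      congr 2
      ext; simp; omega
  · rintro ⟨h0, h⟩ i k hk
    have hl := getLast?_eq d hb (hT _ _ h0)
    by_cases hi : i.val = 0
    · rw [dif_pos hi] at hk
      have : i = 0 := by ext; simpa using hi
      subst this; subst hk; exact h0
    · rw [dif_neg hi] at hk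
      obtain ⟨i', rfl⟩ := Fin.exists_succ_eq.mpr (show i ≠ 0 from fun e => hi (by simp [e]))
      apply h i' k
      by_cases hi' : i'.val = 0
      · rw [dif_pos hi']
        have e : (⟨i'.succ.val - 1, by omega⟩ : Fin (n + 1)) = 0 := by ext; simp [hi']
        rw [e, hl] at hk
        exact (Option.some.inj hk).symm
      · rw [dif_neg hi']
        have e : (⟨i'.succ.val - 1, by omega⟩ : Fin (n + 1))
            = Fin.succ ⟨i'.val - 1, by omega⟩ := by
          apply Fin.ext
          simp only [Fin.val_succ]
          omega
        rw [e] at hk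
        exact hk

theorem chain_len (d : Fin q) {b : ℕ} (hb : 0 < b) (T : Fin q → Finset (List (Fin q)))
    (hT : ∀ j, ∀ s ∈ T j, s.length = b) (n : ℕ) : ∀ (j : Fin q) (z : Fin n → List (Fin q)),
    Chain T n j z → ∀ i, (z i).length = b := by
  induction n with
  | zero => intro j z _ i; exact i.elim0
  | succ n ih =>
    intro j z h i
    rw [chain_succ d hb T hT] at h
    refine Fin.cases (hT _ _ h.1) (fun i => ih _ _ h.2 i) i

theorem mem_codeSet (d : Fin q) {b : ℕ} (hb : 0 < b) (T : Fin q → Finset (List (Fin q)))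
    (hT : ∀ j, ∀ s ∈ T j, s.length = b) (n : ℕ) : ∀ (j : Fin q) (x : List (Fin q)),
    x ∈ codeSet d T n j ↔ ∃ z : Fin n → List (Fin q), x = (List.ofFn z).flatten ∧ Chain T n j z := by
  induction n with
  | zero =>
    intro j x
    simp only [codeSet, Finset.mem_singleton, List.ofFn_zero, List.flatten_nil]
    constructor
    · rintro rfl; exact ⟨fun i => i.elim0, rfl, fun i => i.elim0⟩
    · rintro ⟨_, h, _⟩; exact h
  | succ n ih =>
    intro j x
    simp only [codeSet, Finset.mem_biUnion, Finset.mem_image]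
    constructor
    · rintro ⟨s, hs, r, hr, rfl⟩
      obtain ⟨z, rfl, hz⟩ := (ih _ _).1 hr
      refine ⟨Fin.cons s z, by simp [List.ofFn_succ], ?_⟩
      rw [chain_succ d hb T hT]
      simpa using ⟨hs, hz⟩
    · rintro ⟨z, rfl, hz⟩
      rw [chain_succ d hb T hT] at hz
      refine ⟨z 0, hz.1, _, (ih _ _).2 ⟨_, rfl, hz.2⟩, by simp [List.ofFn_succ]⟩

theorem seg_flatten {b : ℕ} (n : ℕ) : ∀ (z : Fin n → List (Fin q)),
    (∀ i, (z i).length = b) → ∀ i : Fin n, seg b (List.ofFn z).flatten i = z i := by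
  induction n with
  | zero => intro z _ i; exact i.elim0
  | succ n ih =>
    intro z h i
    refine Fin.cases ?_ (fun i => ?_) i
    · simp [seg, List.ofFn_succ, ← h 0]
    · rw [← ih (fun i => z i.succ) (fun i => h _) i]
      simp only [seg, List.ofFn_succ, List.flatten_cons, Fin.val_succ]
      rw [show (i.val + 1) * b = (z 0).length + i.val * b by rw [h 0]; ring, ← List.drop_drop,
        List.drop_left]

theorem rel_of (d : Fin q) {b t : ℕ} (hb : 0 < b) (T : Fin q → Finset (List (Fin q)))
    (hT : ∀ j, ∀ s ∈ T j, s.length = b) (n : ℕ) : ∀ (j : Fin q) (z w : Fin n → List (Fin q)),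
    Chain T n j z → (∀ i, w i = z i ∨ w i ∈ burstDelBall t (z i)) →
    Rel b t d T n j (List.ofFn z).flatten (List.ofFn w).flatten := by
  induction n with
  | zero => intro j z w _ _; simp [Rel]
  | succ n ih =>
    intro j z w h hw
    rw [chain_succ d hb T hT] at h
    exact ⟨z 0, w 0, _, _, h.1, hw 0, ih _ _ _ h.2 (fun i => hw i.succ), by simp [List.ofFn_succ],
      by simp [List.ofFn_succ]⟩

theorem rel_head (d : Fin q) {b t : ℕ} (h3t : 3 * t ≤ b) (ht : 0 < t)
    (T : Fin q → Finset (List (Fin q)))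
    (hT : ∀ j, ∀ s ∈ T j, s.length = b) (hT0 : ∀ j, ∀ s ∈ T j, s[0]? ≠ some j)
    (hTt : ∀ j, ∀ s ∈ T j, s[t]? ≠ some j) (n : ℕ) (j : Fin q) (x y : List (Fin q))
    (h : Rel b t d T n j x y) : y[0]? ≠ some j := by
  cases n with
  | zero => simp [h.2]
  | succ n =>
    obtain ⟨s, z, x2, y2, hs, hz, -, -, rfl⟩ := h
    have hl := hT _ _ hs
    rcases hz with rfl | ⟨i, hi, rfl⟩
    · rw [List.getElem?_append_left (by omega)]; exact hT0 _ _ hs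
    · rw [List.getElem?_append_left (by simp; omega)]
      rcases Nat.eq_zero_or_pos i with rfl | hi0
      · simpa using hTt _ _ hs
      · rw [List.getElem?_append_left (by simp; omega), List.getElem?_take_of_lt hi0]
        exact hT0 _ _ hs

theorem take_mem {b t : ℕ} (hbt : t ≤ b) {s z y : List (Fin q)} (hs : s.length = b)
    (hz : z = s ∨ z ∈ burstDelBall t s) : (z ++ y).take (b - t) ∈ burstDelBall t s := by
  rcases hz with rfl | hz
  · refine ⟨b - t, by omega, ?_⟩
    rw [List.take_append_of_le_length (by omega), List.drop_of_length_le (by omega)]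
    simp
  · have hz' := hz
    obtain ⟨i, hi, rfl⟩ := hz'
    rw [List.take_append_of_le_length (by simp; omega), List.take_of_length_le (by simp; omega)]
    exact hz

theorem no_mix (d : Fin q) {b t : ℕ} (h3t : 3 * t ≤ b) (ht : 0 < t)
    (T : Fin q → Finset (List (Fin q)))
    (hT : ∀ j, ∀ s ∈ T j, s.length = b) (hT0 : ∀ j, ∀ s ∈ T j, s[0]? ≠ some j)
    (hTt : ∀ j, ∀ s ∈ T j, s[t]? ≠ some j)
    (hTb : ∀ j, ∀ s ∈ T j, s[b - t]? = s[b - 1]?) (n : ℕ) (j : Fin q)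
    (s z x2 y2 y2' : List (Fin q)) (hs : s ∈ T j) (hz : z.length = b - t)
    (h : Rel b t d T n (lastD d s) x2 y2) (e : s ++ y2' = z ++ y2) : False := by
  have hl := hT _ _ hs
  have h1 := rel_head d h3t ht T hT hT0 hTt _ _ _ _ h
  apply h1
  have h2 : (s ++ y2')[b - t]? = (z ++ y2)[b - t]? := by rw [e]
  rw [List.getElem?_append_left (by omega), List.getElem?_append_right (by omega), hz,
    Nat.sub_self, hTb _ _ hs] at h2
  rw [← h2, ← getLast?_eq d (by omega : 0 < b) hl, List.getLast?_eq_getElem?, hl]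

theorem rel_unique (d : Fin q) {b t : ℕ} (h3t : 3 * t ≤ b) (ht : 0 < t) {F : Type*}
    (f : List (Fin q) → F) (hf : IsSyndrome b t f) (σ : Fin q → F)
    (T : Fin q → Finset (List (Fin q)))
    (hT : ∀ j, ∀ s ∈ T j, s.length = b) (hT0 : ∀ j, ∀ s ∈ T j, s[0]? ≠ some j)
    (hTt : ∀ j, ∀ s ∈ T j, s[t]? ≠ some j)
    (hTb : ∀ j, ∀ s ∈ T j, s[b - t]? = s[b - 1]?)
    (hTf : ∀ j, ∀ s ∈ T j, f s = σ j) (n : ℕ) : ∀ (j : Fin q) (x x' y : List (Fin q)),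
    Rel b t d T n j x y → Rel b t d T n j x' y → x = x' := by
  induction n with
  | zero => rintro j x x' y ⟨rfl, _⟩ ⟨rfl, _⟩; rfl
  | succ n ih =>
    rintro j x x' y ⟨s, z, x2, y2, hs, hz, hr, rfl, rfl⟩ ⟨s', z', x2', y2', hs', hz', hr', rfl, e⟩
    have hl := hT _ _ hs
    have hl' := hT _ _ hs'
    have m1 := take_mem (t := t) (b := b) (y := y2) (by omega) hl hz
    have m2 := take_mem (t := t) (b := b) (y := y2') (by omega) hl' hz'
    rw [← e] at m2
    have hss : s = s' := by
      by_contra hne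
      have := hf s s' hl hl' hne (by rw [hTf _ _ hs, hTf _ _ hs'])
      exact (Set.eq_empty_iff_forall_notMem.1 this _) ⟨m1, m2⟩
    subst hss
    have key : ∀ w, w ∈ burstDelBall t s → w.length = b - t := by
      rintro w ⟨i, hi, rfl⟩; simp; omega
    have hlen : z.length = z'.length := by
      rcases hz with rfl | hz <;> rcases hz' with rfl | hz'
      · rfl
      · exact (no_mix d h3t ht T hT hT0 hTt hTb n j z z' _ y2' y2 hs (key _ hz') hr' e).elim
      · exact (no_mix d h3t ht T hT hT0 hTt hTb n j z' z _ y2 y2' hs (key _ hz) hr e.symm).elim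
      · rw [key _ hz, key _ hz']
    obtain ⟨-, rfl⟩ := List.append_inj e hlen
    rw [ih _ _ _ _ hr hr']

theorem card_codeSet (d : Fin q) {b : ℕ} (T : Fin q → Finset (List (Fin q)))
    (hT : ∀ j, ∀ s ∈ T j, s.length = b) (M : ℝ) (hM : 0 ≤ M) (hMT : ∀ j, M ≤ ((T j).card : ℝ))
    (n : ℕ) : ∀ j, M ^ n ≤ ((codeSet d T n j).card : ℝ) := by
  induction n with
  | zero => intro j; simp [codeSet]
  | succ n ih =>
    intro j
    rw [codeSet, Finset.card_biUnion]
    · push_cast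
      calc M ^ (n + 1) = M * M ^ n := by ring
        _ ≤ (T j).card * M ^ n := by gcongr; exact hMT j
        _ = ∑ s ∈ T j, M ^ n := by simp
        _ ≤ _ := by
          apply Finset.sum_le_sum
          intro s _
          rw [Finset.card_image_of_injective _ (List.append_right_injective s)]
          exact ih _
    · intro s hs s' hs' hne
      rw [Function.onFun, Finset.disjoint_left]
      simp only [Finset.mem_image]
      rintro _ ⟨r, _, rfl⟩ ⟨r', _, e⟩
      exact hne (List.append_inj e (by rw [hT _ _ hs, hT _ _ hs'])).1.symm

/-- good words -/
def Good (b t : ℕ) (j : Fin q) (s : List (Fin q)) : Prop :=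
  s.length = b ∧ s[0]? ≠ some j ∧ s[t]? ≠ some j ∧ s[2 * t - 1]? ≠ some j ∧ s[b - t]? = s[b - 1]?

theorem exists_good {b t : ℕ} (ht : 2 ≤ t) (h3t : 3 * t ≤ b) (j : Fin q) :
    ∃ G : Finset (List (Fin q)), (∀ s ∈ G, Good b t j s) ∧
      G.card = q ^ (b - 4) * (q - 1) ^ 3 := by
  classical
  obtain ⟨m, rfl⟩ : ∃ m, b = m + 1 := ⟨b - 1, by omega⟩
  let P : Finset (Fin m) := {⟨0, by omega⟩, ⟨t, by omega⟩, ⟨2 * t - 1, by omega⟩}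
  have hP : P.card = 3 := by
    rw [Finset.card_eq_three]
    refine ⟨_, _, _, ?_, ?_, ?_, rfl⟩ <;> simp [Fin.ext_iff] <;> omega
  let A : Fin m → Finset (Fin q) := fun i => if i ∈ P then univ.erase j else univ
  let φ : (Fin m → Fin q) → List (Fin q) := fun g => List.ofFn g ++ [g ⟨m + 1 - t, by omega⟩]
  have hφ : Function.Injective φ := by
    intro g g' h
    have := (List.append_inj h (by simp)).1
    exact List.ofFn_injective this
  refine ⟨(Fintype.piFinset A).image φ, ?_, ?_⟩
  · intro s hs
    obtain ⟨g, hg, rfl⟩ := Finset.mem_image.1 hs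
    rw [Fintype.mem_piFinset] at hg
    have hget : ∀ i (hi : i < m), (φ g)[i]? = some (g ⟨i, hi⟩) := by
      intro i hi
      simp only [φ]
      rw [List.getElem?_append_left (by simpa using hi)]
      simp [hi]
    have hne : ∀ i ∈ P, g i ≠ j := by
      intro i hi
      have := hg i
      simp only [A, if_pos hi] at this
      simpa using this
    refine ⟨by simp [φ], ?_, ?_, ?_, ?_⟩
    · rw [hget 0 (by omega)]; intro h; exact hne _ (by simp [P]) (Option.some.inj h)
    · rw [hget t (by omega)]; intro h; exact hne _ (by simp [P]) (Option.some.inj h)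
    · rw [hget (2 * t - 1) (by omega)]; intro h; exact hne _ (by simp [P]) (Option.some.inj h)
    · rw [hget _ (by omega)]
      simp [φ]
  · rw [Finset.card_image_of_injective _ hφ, Fintype.card_piFinset]
    have : ∀ i, (A i).card = if i ∈ P then q - 1 else q := by
      intro i
      simp only [A]
      split_ifs <;> simp
    simp only [this]
    rw [Finset.prod_ite, Finset.prod_const, Finset.prod_const]
    have h1 : (univ.filter (fun i => i ∈ P)) = P := by ext; simp
    have h2 : (univ.filter (fun i => i ∉ P)) = Pᶜ := by ext; simp
    rw [h1, h2, Finset.card_compl, hP, Fintype.card_fin, mul_comm,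
      show m + 1 - 4 = m - 3 by omega]

theorem exists_sigma {b t : ℕ} (hq : 2 < q) (ht : 2 ≤ t) (h3t : 3 * t ≤ b) (F : Type*) [Fintype F]
    [Nonempty F] (f : List (Fin q) → F) (j : Fin q) :
    ∃ (c : F) (T : Finset (List (Fin q))),
      (∀ s, s ∈ T ↔ s.length = b ∧ f s = c ∧ s[0]? ≠ some j ∧
          s[t]? ≠ some j ∧ s[2 * t - 1]? ≠ some j ∧ s[b - t]? = s[b - 1]?) ∧
      (q : ℝ) ^ (b - 4) * ((q : ℝ) - 1) ^ 3 / Fintype.card F ≤ (T.card : ℝ) := by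
  classical
  obtain ⟨G, hG, hc⟩ := exists_good ht h3t j
  have hF : (0 : ℝ) < Fintype.card F := by exact_mod_cast Fintype.card_pos
  obtain ⟨c, hc'⟩ : ∃ c : F, (G.card : ℝ) / Fintype.card F ≤ ((G.filter (fun s => f s = c)).card : ℝ) := by
    by_contra! hcon
    have h1 : (G.card : ℝ) = ∑ c : F, ((G.filter (fun s => f s = c)).card : ℝ) := by
      exact_mod_cast Finset.card_eq_sum_card_fiberwise (fun s _ => Finset.mem_coe.2 (mem_univ (f s)))
    have h2 : ∑ c : F, ((G.filter (fun s => f s = c)).card : ℝ)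
        < ∑ c : F, (G.card : ℝ) / Fintype.card F :=
      Finset.sum_lt_sum_of_nonempty univ_nonempty (fun c _ => hcon c)
    rw [← h1] at h2
    simp at h2
    rw [mul_div_cancel₀ _ hF.ne'] at h2
    exact lt_irrefl _ h2
  have hfin : {s : List (Fin q) | s.length = b ∧ f s = c ∧ s[0]? ≠ some j ∧
          s[t]? ≠ some j ∧ s[2 * t - 1]? ≠ some j ∧ s[b - t]? = s[b - 1]?}.Finite :=
    (List.finite_length_eq (Fin q) b).subset (fun s hs => hs.1)
  refine ⟨c, hfin.toFinset, fun s => by simp, ?_⟩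
  have e : (q : ℝ) ^ (b - 4) * ((q : ℝ) - 1) ^ 3 = G.card := by
    rw [hc]; push_cast [Nat.cast_sub (by omega : 1 ≤ q)]; ring
  rw [e]
  refine hc'.trans ?_
  norm_cast
  apply Finset.card_le_card
  intro s hs
  rw [Finset.mem_filter] at hs
  obtain ⟨h1, h2, h3, h4, h5⟩ := hG s hs.1
  rw [Set.Finite.mem_toFinset]
  exact ⟨h1, hs.2, h2, h3, h4, h5⟩

end Stmt3Aux

/-- there is a choice of syndrome values `σ_0, …, σ_{q-1}` for which
the `q`-ary (`q > 2`) segmented code is a segmented burst-of-`t`-deletions ECC of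
size at least `(q^(b-4)(q-1)^3/|F|)^γ`. -/
theorem stmt3 (q b t γ : ℕ) (hq : 2 < q) (ht : 2 ≤ t) (hγ : 0 < γ)
    (h3t : 3 * t ≤ b) (F : Type*) [Fintype F] [Nonempty F]
    (f : List (Fin q) → F) (hf : IsSyndrome b t f) :
    ∃ σ : Fin q → F,
    ∀ S : Fin q → Set (List (Fin q)),
      S = (fun j => {s | s.length = b ∧ f s = σ j ∧ s[0]? ≠ some j ∧
          s[t]? ≠ some j ∧ s[2 * t - 1]? ≠ some j ∧ s[b - t]? = s[b - 1]?}) →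
    ∀ C : Set (List (Fin q)),
      C = {x | ∃ z : Fin γ → List (Fin q),
          x = (List.ofFn z).flatten ∧
          z ⟨0, hγ⟩ ∈ S ⟨0, by omega⟩ ∧
          ∀ i : Fin γ, 0 < i.val → ∀ j : Fin q,
            (z ⟨i.val - 1, Nat.lt_of_le_of_lt (Nat.pred_le _) i.isLt⟩).getLast?
              = some j →
            z i ∈ S j} →
      (∀ x ∈ C, ∀ x' ∈ C, x ≠ x' →
        segBall b t γ x ∩ segBall b t γ x' = ∅) ∧
      ((q : ℝ) ^ (b - 4) * ((q : ℝ) - 1) ^ 3 / Fintype.card F) ^ γ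
        ≤ (C.ncard : ℝ) := by
  classical
  choose σ T hT hM using Stmt3Aux.exists_sigma hq ht h3t F f
  refine ⟨σ, ?_⟩
  rintro S rfl C rfl
  set d : Fin q := ⟨0, by omega⟩ with hd
  have hb : 0 < b := by omega
  have hTl : ∀ j, ∀ s ∈ T j, s.length = b := fun j s hs => ((hT j s).1 hs).1
  have hTf : ∀ j, ∀ s ∈ T j, f s = σ j := fun j s hs => ((hT j s).1 hs).2.1
  have hT0 : ∀ j, ∀ s ∈ T j, s[0]? ≠ some j := fun j s hs => ((hT j s).1 hs).2.2.1
  have hTt : ∀ j, ∀ s ∈ T j, s[t]? ≠ some j := fun j s hs => ((hT j s).1 hs).2.2.2.1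
  have hTb : ∀ j, ∀ s ∈ T j, s[b - t]? = s[b - 1]? := fun j s hs => ((hT j s).1 hs).2.2.2.2.2
  have hS : ∀ (j : Fin q), {s | s.length = b ∧ f s = σ j ∧ s[0]? ≠ some j ∧
      s[t]? ≠ some j ∧ s[2 * t - 1]? ≠ some j ∧ s[b - t]? = s[b - 1]?}
      = (T j : Set (List (Fin q))) := by
    intro j; ext s; rw [Finset.mem_coe, hT]; rfl
  simp only [hS, Finset.mem_coe]
  have hch : ∀ z : Fin γ → List (Fin q), (z ⟨0, hγ⟩ ∈ T d ∧
          ∀ i : Fin γ, 0 < i.val → ∀ j : Fin q,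
            (z ⟨i.val - 1, Nat.lt_of_le_of_lt (Nat.pred_le _) i.isLt⟩).getLast?
              = some j → z i ∈ T j) ↔ Stmt3Aux.Chain T γ d z := by
    intro z
    constructor
    · rintro ⟨h0, h⟩ i k hk
      by_cases hi : i.val = 0
      · rw [dif_pos hi] at hk
        have : i = ⟨0, hγ⟩ := Fin.ext hi
        rw [this, hk]; exact h0
      · rw [dif_neg hi] at hk
        exact h i (by omega) k hk
    · intro h
      refine ⟨h _ d (by simp), fun i hi k hk => h i k ?_⟩
      rw [dif_neg (by omega)]; exact hk
  simp only [hch]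
  constructor
  · rintro x ⟨z, rfl, hz⟩ x' ⟨z', rfl, hz'⟩ hne
    rw [Set.eq_empty_iff_forall_notMem]
    rintro y ⟨⟨w, hw, rfl⟩, ⟨w', hw', e⟩⟩
    have l := Stmt3Aux.seg_flatten γ z (Stmt3Aux.chain_len d hb T hTl γ d z hz)
    have l' := Stmt3Aux.seg_flatten γ z' (Stmt3Aux.chain_len d hb T hTl γ d z' hz')
    simp only [l] at hw
    simp only [l'] at hw'
    have r := Stmt3Aux.rel_of d hb T hTl γ d z w hz hw
    have r' := Stmt3Aux.rel_of d hb T hTl γ d z' w' hz' hw'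
    rw [← e] at r'
    exact hne (Stmt3Aux.rel_unique d h3t (by omega) f hf σ T hTl hT0 hTt hTb hTf γ d _ _ _ r r')
  · have hC : {x | ∃ z : Fin γ → List (Fin q), x = (List.ofFn z).flatten ∧ Stmt3Aux.Chain T γ d z}
        = (Stmt3Aux.codeSet d T γ d : Set (List (Fin q))) := by
      ext x
      rw [Finset.mem_coe, Stmt3Aux.mem_codeSet d hb T hTl]; rfl
    rw [hC, Set.ncard_coe_finset]
    apply Stmt3Aux.card_codeSet d T hTl _ _ hM
    have : (1 : ℝ) ≤ q := by exact_mod_cast (by omega : 1 ≤ q)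
    have : (0 : ℝ) ≤ (q : ℝ) - 1 := by linarith
    positivity
end

section
/- Let b, t, γ be positive integers with 2t < b, let F be a finite set and f : Σ_2^b → F a one-burst-t-deletion syndrome function. Let x = x_1 x_2 ⋯ x_γ ∈ Σ_2^{bγ} be such that every segment satisfies x_{i,t+1} ≠ x_{i,2t} and x_{i,b−t+1} = x_{i,b}, and x_{i,1} ≠ x_{i−1,b} for every i ∈ [2,γ]. Let y be obtained from x by deleting, from each segment i, either no symbols (d_i = 0) or one burst of t consecutive symbols (d_i = t). Fix i ∈ [1,γ], set p_i = (i−1)b − Σ_{j<i} d_j, and assume p_i + b ≤ |y|. If f(y(p_i+1 : p_i+b)) = f(x_i), then d_i = 0 and y(p_i+1 : p_i+b) = x_i (so the (i+1)-th segment of x starts at position p_i + b + 1 of y). -/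
theorem aux_len {γ b : ℕ} (d : Fin γ → ℕ) (z : Fin γ → List (Fin 2))
    (h : ∀ i, (z i).length + d i = b) (n : ℕ) (hn : n ≤ γ) :
    (((List.ofFn z).map List.length).take n).sum +
      ∑ j ∈ Finset.univ.filter (fun j : Fin γ => j.val < n), d j = n * b := by
  induction n with
  | zero => simp
  | succ n ih =>
    have h1 := ih (by omega)
    have h2 := h ⟨n, hn⟩
    have e : Finset.univ.filter (fun j : Fin γ => j.val < n + 1) =
        insert ⟨n, hn⟩ (Finset.univ.filter (fun j : Fin γ => j.val < n)) := by
      ext j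
      simp [Fin.ext_iff]
      omega
    rw [e, Finset.sum_insert (by simp), List.sum_take_succ _ _ (by simpa using hn)]
    simp only [List.getElem_map, List.getElem_ofFn]
    rw [add_mul]
    omega

/-- binary decoding lemma.  If the windowed syndrome matches the
segment syndrome, then the segment suffered no deletion and is read off exactly,
so the next segment starts at position `p_i + b + 1`. -/
theorem stmt4 (b t γ : ℕ) (hb : 0 < b) (ht : 0 < t) (hγ : 0 < γ)
    (h2t : 2 * t < b) (F : Type*) [Fintype F]
    (f : List (Fin 2) → F) (hf : IsSyndrome b t f)
    (x : List (Fin 2)) (hx : x.length = b * γ)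
    (hseg1 : ∀ i : Fin γ, (seg b x i)[t]? ≠ (seg b x i)[2 * t - 1]?)
    (hseg2 : ∀ i : Fin γ, (seg b x i)[b - t]? = (seg b x i)[b - 1]?)
    (hseg3 : ∀ i : Fin γ, 0 < i.val →
      (seg b x i)[0]? ≠ (seg b x (i.val - 1))[b - 1]?)
    (d : Fin γ → ℕ) (hd : ∀ i, d i = 0 ∨ d i = t)
    (z : Fin γ → List (Fin 2))
    (hz0 : ∀ i, d i = 0 → z i = seg b x i)
    (hzt : ∀ i, d i = t → z i ∈ burstDelBall t (seg b x i))
    (y : List (Fin 2)) (hy : y = (List.ofFn z).flatten)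
    (i : Fin γ) (p : ℕ)
    (hp : p = i.val * b - ∑ j ∈ Finset.univ.filter (fun j : Fin γ => j < i), d j)
    (hpb : p + b ≤ y.length)
    (hfy : f ((y.drop p).take b) = f (seg b x i)) :
    d i = 0 ∧ (y.drop p).take b = seg b x i := by
  have hsl : ∀ j : Fin γ, (seg b x j).length = b := by
    intro j
    have h1 : (j.val + 1) * b ≤ γ * b := Nat.mul_le_mul_right _ j.isLt
    rw [add_mul] at h1
    simp only [seg, List.length_take, List.length_drop, hx, mul_comm b γ]
    omega
  have hzl : ∀ j : Fin γ, (z j).length + d j = b := by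
    intro j
    have hs := hsl j
    rcases hd j with h | h
    · rw [hz0 j h, h, hs]; rfl
    · obtain ⟨k, hk, e⟩ := hzt j h
      rw [e, h]
      simp only [List.length_append, List.length_take, List.length_drop]
      omega
  have hlen := aux_len d z hzl i.val i.isLt.le
  have hp' : p = (((List.ofFn z).map List.length).take i.val).sum := by
    have e : Finset.univ.filter (fun j : Fin γ => j < i) =
        Finset.univ.filter (fun j : Fin γ => j.val < i.val) := by
      ext j; simp
    rw [hp, e]; omega
  have hdrop : y.drop p = z i ++ ((List.ofFn z).drop (i.val + 1)).flatten := by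
    rw [hy, hp', List.drop_sum_flatten, List.drop_eq_getElem_cons (by simp)]
    simp
  have hyl : b ≤ (y.drop p).length := by rw [List.length_drop]; omega
  rw [hdrop] at hfy hyl ⊢
  have hs := hsl i
  have hzi := hzl i
  rcases hd i with h0 | h0
  · refine ⟨h0, ?_⟩
    have := hz0 i h0
    rw [this, List.take_append_of_le_length (by omega), List.take_of_length_le (by omega)]
  exfalso
  generalize hR : ((List.ofFn z).drop (i.val + 1)).flatten = R at *
  have hw : (z i ++ R).take b = seg b x i := by
    by_contra hne
    have hwl : ((z i ++ R).take b).length = b := by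
      rw [List.length_take]; omega
    have := hf _ _ hwl hs hne hfy
    have hm : z i ∈ burstDelBall t ((z i ++ R).take b) ∩ burstDelBall t (seg b x i) := by
      refine ⟨⟨b - t, by omega, ?_⟩, hzt i h0⟩
      rw [List.drop_of_length_le (by omega), List.take_take, List.append_nil,
        List.take_append_of_le_length (by omega), List.take_of_length_le (by omega)]
    rw [this] at hm
    exact hm
  have hRl : t ≤ R.length := by
    rw [List.length_append] at hyl; omega
  have hi1 : i.val + 1 < γ := by
    by_contra hc
    rw [List.drop_of_length_le (by simp; omega)] at hR
    rw [← hR] at hRl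
    simp at hRl
    omega
  have hR2 : R = z ⟨i.val + 1, hi1⟩ ++ ((List.ofFn z).drop (i.val + 2)).flatten := by
    rw [← hR, List.drop_eq_getElem_cons (by simpa using hi1)]
    simp
  set j : Fin γ := ⟨i.val + 1, hi1⟩ with hj
  have hzj := hzl j
  have hsj := hsl j
  have key : ∀ k, k < t → (z j)[k]? = (seg b x i)[b - t + k]? := by
    intro k hk
    have hdj := hd j
    rw [← hw, List.getElem?_take_of_lt (by omega), List.getElem?_append_right (by omega), hR2,
      List.getElem?_append_left (by omega)]
    congr 1
    omega
  have k0 := key 0 ht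
  have k1 := key (t - 1) (by omega)
  rw [add_zero] at k0
  rw [show b - t + (t - 1) = b - 1 by omega, ← hseg2 i, ← k0] at k1
  have h3 := hseg3 j (by simp [hj])
  have h1 := hseg1 j
  rw [show j.val - 1 = i.val by simp [hj], ← hseg2 i, ← k0] at h3
  rcases hd j with h | h
  · rw [hz0 j h] at h3
    exact h3 rfl
  · obtain ⟨k, hk, e⟩ := hzt j h
    rcases Nat.eq_zero_or_pos k with hk0 | hk0
    · subst hk0
      rw [e] at k1
      simp only [List.take_zero, List.nil_append, List.getElem?_drop] at k1
      apply h1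
      rw [show 2 * t - 1 = 0 + t + (t - 1) by omega, k1]
      congr 1
      omega
    · apply h3
      rw [e, List.getElem?_append_left (by rw [List.length_take]; omega),
        List.getElem?_take_of_lt hk0]
end

section
/- Let q > 2, let b, t, γ be positive integers with 2t < b, let F be a finite set and f : Σ_q^b → F a one-burst-t-deletion syndrome function. Let x = x_1 x_2 ⋯ x_γ ∈ Σ_q^{bγ} be such that every segment satisfies x_{i,b−t+1} = x_{i,b}, and for every i ∈ [2,γ] the symbols x_{i,1}, x_{i,t+1}, x_{i,2t} are all different from x_{i−1,b}. Let y be obtained from x by deleting, from each segment i, either no symbols (d_i = 0) or one burst of t consecutive symbols (d_i = t). Fix i ∈ [1,γ], set p_i = (i−1)b − Σ_{j<i} d_j, and assume p_i + b ≤ |y|. If f(y(p_i+1 : p_i+b)) = f(x_i), then d_i = 0 and y(p_i+1 : p_i+b) = x_i (so the (i+1)-th segment of x starts at position p_i + b + 1 of y). -/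
theorem seg_length_aux {q : ℕ} (b γ : ℕ) (x : List (Fin q)) (hx : x.length = b * γ)
    (i : Fin γ) : (seg b x i).length = b := by
  have h : (i.val + 1) * b ≤ γ * b := Nat.mul_le_mul_right b i.isLt
  have h3 : γ * b = b * γ := Nat.mul_comm _ _
  have h2 : (i.val + 1) * b = i.val * b + b := by ring
  simp only [seg, List.length_take, List.length_drop]
  omega

theorem prefix_length_aux {q : ℕ} (b γ : ℕ) (d : Fin γ → ℕ) (z : Fin γ → List (Fin q))
    (hl : ∀ j, (z j).length + d j = b) (k : ℕ) (hk : k ≤ γ) :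
    (((List.ofFn z).take k).flatten).length
      + ∑ j ∈ Finset.univ.filter (fun j : Fin γ => j.val < k), d j = k * b := by
  induction k with
  | zero => simp
  | succ k ih =>
    have hk' : k < γ := hk
    have ih := ih hk'.le
    have e1 : (List.ofFn z).take (k + 1) = (List.ofFn z).take k ++ [z ⟨k, hk'⟩] := by
      rw [List.take_succ_eq_append_getElem (by simpa using hk')]
      simp
    have e2 : (Finset.univ.filter (fun j : Fin γ => j.val < k + 1))
        = insert ⟨k, hk'⟩ (Finset.univ.filter (fun j : Fin γ => j.val < k)) := by
      ext j
      simp [Fin.ext_iff]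
      omega
    rw [e1, e2, Finset.sum_insert (by simp)]
    have := hl ⟨k, hk'⟩
    rw [List.flatten_append, List.length_append]
    simp only [List.flatten_cons, List.flatten_nil, List.append_nil]
    have h3 : (k + 1) * b = k * b + b := by ring
    omega

theorem drop_flatten_aux {α : Type*} (L : List (List α)) (k : ℕ) :
    L.flatten.drop ((L.take k).flatten.length) = (L.drop k).flatten := by
  conv_lhs => rw [← List.take_append_drop k L]
  rw [List.flatten_append]
  have : (List.take k (List.take k L ++ List.drop k L)) = List.take k L := by simp
  rw [this, List.drop_left]

theorem drop_ofFn_aux {α : Type*} (γ : ℕ) (z : Fin γ → α) (i : Fin γ) :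
    (List.ofFn z).drop i = z i :: (List.ofFn z).drop (i + 1) := by
  rw [List.drop_eq_getElem_cons (by simp)]
  simp

/-- `q`-ary (`q > 2`) decoding lemma.  If the windowed syndrome
matches the segment syndrome, then the segment suffered no deletion and is read
off exactly, so the next segment starts at position `p_i + b + 1`. -/
theorem stmt5 (q b t γ : ℕ) (hq : 2 < q) (hb : 0 < b) (ht : 0 < t) (hγ : 0 < γ)
    (h2t : 2 * t < b) (F : Type*) [Fintype F]
    (f : List (Fin q) → F) (hf : IsSyndrome b t f)
    (x : List (Fin q)) (hx : x.length = b * γ)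
    (hseg1 : ∀ i : Fin γ, (seg b x i)[b - t]? = (seg b x i)[b - 1]?)
    (hseg2 : ∀ i : Fin γ, 0 < i.val →
      (seg b x i)[0]? ≠ (seg b x (i.val - 1))[b - 1]? ∧
      (seg b x i)[t]? ≠ (seg b x (i.val - 1))[b - 1]? ∧
      (seg b x i)[2 * t - 1]? ≠ (seg b x (i.val - 1))[b - 1]?)
    (d : Fin γ → ℕ) (hd : ∀ i, d i = 0 ∨ d i = t)
    (z : Fin γ → List (Fin q))
    (hz0 : ∀ i, d i = 0 → z i = seg b x i)
    (hzt : ∀ i, d i = t → z i ∈ burstDelBall t (seg b x i))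
    (y : List (Fin q)) (hy : y = (List.ofFn z).flatten)
    (i : Fin γ) (p : ℕ)
    (hp : p = i.val * b - ∑ j ∈ Finset.univ.filter (fun j : Fin γ => j < i), d j)
    (hpb : p + b ≤ y.length)
    (hfy : f ((y.drop p).take b) = f (seg b x i)) :
    d i = 0 ∧ (y.drop p).take b = seg b x i := by
  have hsl := seg_length_aux b γ x hx
  have hl : ∀ j, (z j).length + d j = b := by
    intro j
    rcases hd j with h | h
    · rw [hz0 j h, hsl j, h]; rfl
    · obtain ⟨k, hk, e⟩ := hzt j h
      have := hsl j
      rw [e, h]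
      simp only [List.length_append, List.length_take, List.length_drop]
      omega
  have hpl : p = (((List.ofFn z).take i).flatten).length := by
    have h1 := prefix_length_aux b γ d z hl i i.isLt.le
    have e : (Finset.univ.filter (fun j : Fin γ => j < i))
      = Finset.univ.filter (fun j : Fin γ => j.val < i.val) := by
      ext j; simp
    rw [hp, e]
    omega
  have hdrop : y.drop p = z i ++ ((List.ofFn z).drop (i + 1)).flatten := by
    rw [hy, hpl, drop_flatten_aux, drop_ofFn_aux]
    simp
  have hli := hl i
  rcases hd i with h | h
  · refine ⟨h, ?_⟩
    rw [hdrop, ← hz0 i h, List.take_left']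
    omega
  exfalso
  have hylen : (y.drop p).length = y.length - p := List.length_drop
  -- the window
  have hulen : ((y.drop p).take b).length = b := by
    rw [List.length_take, hylen]; omega
  have hzl : (z i).length = b - t := by omega
  have hueq : (y.drop p).take b = seg b x i := by
    by_contra hne
    have hemp := hf _ _ hulen (hsl i) hne hfy
    have hmem : z i ∈ burstDelBall t ((y.drop p).take b) := by
      refine ⟨b - t, by omega, ?_⟩
      have e1 : ((y.drop p).take b).drop (b - t + t) = [] := by
        apply List.drop_eq_nil_of_le; omega
      rw [e1, List.append_nil, List.take_take, hdrop, List.take_left']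
      omega
    have : z i ∈ burstDelBall t ((y.drop p).take b) ∩ burstDelBall t (seg b x i) :=
      ⟨hmem, hzt i h⟩
    rw [hemp] at this
    exact this
  have hnext : i.val + 1 < γ := by
    by_contra hc
    have e : (List.ofFn z).drop (i + 1) = [] := by
      apply List.drop_eq_nil_of_le
      simp; omega
    rw [hdrop, e] at hylen
    simp at hylen
    omega
  let i' : Fin γ := ⟨i.val + 1, hnext⟩
  have hdrop2 : y.drop p = z i ++ (z i' ++ ((List.ofFn z).drop (i.val + 1 + 1)).flatten) := by
    rw [hdrop]
    have := drop_ofFn_aux γ z i'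
    simp only [i'] at this
    rw [this]
    simp [i']
  have hget : (seg b x i)[b - t]? = (z i')[0]? := by
    have hl' := hl i'
    have hdd := hd i'
    rw [← hueq, List.getElem?_take, if_pos (by omega), hdrop2,
      List.getElem?_append_right (by omega), List.getElem?_append_left (by omega)]
    congr 1
    omega
  have h2 := hseg2 i' (by simp [i'])
  simp only [i', Nat.add_sub_cancel] at h2
  rw [← hseg1 i, hget] at h2
  obtain ⟨ha, hb', -⟩ := h2
  rcases hd i' with h' | h'
  · rw [hz0 i' h'] at ha
    exact ha rfl
  · obtain ⟨k, hk, e⟩ := hzt i' h'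
    have hs := hsl i'
    rcases Nat.eq_zero_or_pos k with rfl | hkp
    · apply hb'
      rw [e]
      simp [i']
    · apply ha
      rw [e, List.getElem?_append_left (by rw [List.length_take]; omega), List.getElem?_take,
        if_pos hkp]
end

section
/- Let b, t be positive integers with 2t ≤ b. Let u, v ∈ Σ_2^b satisfy u_{b−t+1} = u_b, v_1 ≠ u_b, and v_{t+1} ≠ v_{2t}. Then for every w ∈ B_t^D(v), the first t symbols of w differ from the last t symbols of u, i.e., w(1:t) ≠ u(b−t+1 : b). -/
/-- for binary sequences with the boundary constraints, the first
`t` symbols of any sequence obtained from `v` by one burst of `t` deletions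
differ from the last `t` symbols of `u`. -/
theorem stmt6 (b t : ℕ) (hb : 0 < b) (ht : 0 < t) (h2t : 2 * t ≤ b)
    (u v : List (Fin 2)) (hu : u.length = b) (hv : v.length = b)
    (hu2 : u[b - t]? = u[b - 1]?) (hv1 : v[0]? ≠ u[b - 1]?)
    (hv2 : v[t]? ≠ v[2 * t - 1]?) :
    ∀ w ∈ burstDelBall t v, w.take t ≠ u.drop (b - t) := by
  rintro w ⟨i, hi, rfl⟩ h
  have h0 := congrArg (fun l => l[0]?) h
  have h1 := congrArg (fun l => l[t - 1]?) h
  simp only [List.getElem?_take, List.getElem?_drop, ht, if_true] at h0 h1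
  rcases Nat.eq_zero_or_pos i with rfl | hp
  · have e1 : t - 1 < t := by omega
    have e2 : t + (t - 1) = 2 * t - 1 := by omega
    have e3 : b - t + (t - 1) = b - 1 := by omega
    simp only [List.take_zero, List.nil_append, List.getElem?_drop, e1, e2, e3, if_true,
      Nat.add_zero, Nat.zero_add] at h0 h1
    exact hv2 (h0.trans (hu2.trans h1.symm))
  · have hl : 0 < (v.take i).length := by
      rw [List.length_take]; omega
    rw [List.getElem?_append_left hl, List.getElem?_take, if_pos hp, Nat.add_zero] at h0
    exact hv1 (h0.trans hu2)
end

section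
/- Let q ≥ 2 and let b, t, γ be positive integers with t ≥ 2 and 2t < b. Then for every x ∈ Σ_q^{bγ}, the number of sequences x′ ∈ Σ_q^{bγ} with x′ ≠ x and B^D_{γ,t}(x′) ∩ B^D_{γ,t}(x) ≠ ∅ is at most b^{2γ} · q^{γt}. -/
/-- Deletion of the burst at `j` when it fits in length `b`, no deletion otherwise. -/
def delPat {q : ℕ} (b t : ℕ) (s : List (Fin q)) (j : ℕ) : List (Fin q) :=
  if j + t ≤ b then s.take j ++ s.drop (j + t) else s

lemma seg_length {q : ℕ} {b γ : ℕ} {x : List (Fin q)} (hx : x.length = b * γ) (i : Fin γ) :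
    (seg b x i).length = b := by
  obtain ⟨i, hi⟩ := i
  have h : (i + 1) * b ≤ γ * b := Nat.mul_le_mul_right _ hi
  simp only [seg, List.length_take, List.length_drop, hx]
  rw [Nat.min_eq_left]
  rw [Nat.mul_comm b γ]
  rw [Nat.add_mul] at h
  omega

lemma delPat_length {q : ℕ} (b t : ℕ) (s s' : List (Fin q)) (j : ℕ) (h : s.length = b)
    (h' : s'.length = b) : (delPat b t s j).length = (delPat b t s' j).length := by
  unfold delPat
  split_ifs <;> simp [h, h']

lemma delPat_inj {q : ℕ} (b t : ℕ) (d : Fin q) (s s' : List (Fin q)) (j : ℕ)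
    (h : s.length = b) (h' : s'.length = b) (he : delPat b t s j = delPat b t s' j)
    (hw : ∀ k : Fin t, s.getD (j + k) d = s'.getD (j + k) d) : s = s' := by
  unfold delPat at he
  split_ifs at he with hj
  · obtain ⟨h1, h2⟩ := List.append_inj he (by simp [h, h'])
    apply List.ext_getElem (by rw [h, h'])
    intro n hn hn'
    rcases lt_or_ge n j with c | c
    · have := congrArg (fun l => l[n]?) h1
      simpa [List.getElem?_take, c, hn, hn'] using this
    · rcases lt_or_ge n (j + t) with c2 | c2
      · have := hw ⟨n - j, by omega⟩
        simp only [Nat.add_sub_cancel' c] at this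
        simpa [List.getD, hn, hn'] using this
      · have := congrArg (fun l => l[n - (j + t)]?) h2
        simpa [List.getElem?_drop, Nat.add_sub_cancel' c2, hn, hn'] using this
  · exact he

lemma eq_of_seg {q : ℕ} {b γ : ℕ} {x y : List (Fin q)} (hb : 0 < b) (hx : x.length = b * γ)
    (hy : y.length = b * γ) (h : ∀ i : Fin γ, seg b x i = seg b y i) : x = y := by
  apply List.ext_getElem (by rw [hx, hy])
  intro n hn hn'
  have hi : n / b < γ := Nat.div_lt_of_lt_mul (by omega)
  have := congrArg (fun l => l[n % b]?) (h ⟨n / b, hi⟩)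
  simpa [seg, List.getElem?_take, List.getElem?_drop, Nat.mod_lt n hb, Nat.div_add_mod', hn, hn']
    using this

lemma exists_pat {q : ℕ} {b t γ : ℕ} (ht : 2 ≤ t) (hb : 2 * t < b) {x y : List (Fin q)}
    (hx : x.length = b * γ) (hy : y ∈ segBall b t γ x) :
    ∃ p : Fin γ → Fin b, y = (List.ofFn fun i => delPat b t (seg b x i) (p i)).flatten := by
  obtain ⟨z, hz, rfl⟩ := hy
  have : ∀ i, ∃ p : Fin b, z i = delPat b t (seg b x i) p := by
    intro i
    rcases hz i with h | ⟨j, hj, h⟩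
    · refine ⟨⟨b - 1, by omega⟩, ?_⟩
      rw [delPat, if_neg (by simp only; omega), h]
    · rw [seg_length hx] at hj
      refine ⟨⟨j, by omega⟩, ?_⟩
      rw [delPat, if_pos hj, h]
  choose p hp using this
  exact ⟨p, by rw [← funext hp]⟩

/-- the number of confusable sequences — sequences `x' ≠ x` whose
segmented burst-deletion ball intersects that of `x` — is at most
`b^(2γ) q^(γt)`. -/
theorem stmt15 (q b t γ : ℕ) (hq : 2 ≤ q) (ht : 2 ≤ t) (hγ : 0 < γ)
    (h2t : 2 * t < b) (x : List (Fin q)) (hx : x.length = b * γ) :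
    {x' : List (Fin q) | x'.length = b * γ ∧ x' ≠ x ∧
      (segBall b t γ x' ∩ segBall b t γ x).Nonempty}.ncard
      ≤ b ^ (2 * γ) * q ^ (γ * t) := by
  set S := {x' : List (Fin q) | x'.length = b * γ ∧ x' ≠ x ∧
      (segBall b t γ x' ∩ segBall b t γ x).Nonempty} with hS
  let d : Fin q := ⟨0, by omega⟩
  have key : ∀ s : S, ∃ D : (Fin γ → Fin b) × (Fin γ → Fin b) × (Fin γ → Fin t → Fin q),
      (List.ofFn fun i => delPat b t (seg b s.1 i) (D.2.1 i)).flatten =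
        (List.ofFn fun i => delPat b t (seg b x i) (D.1 i)).flatten ∧
      ∀ (i : Fin γ) (k : Fin t), (seg b s.1 i).getD (D.2.1 i + k) d = D.2.2 i k := by
    rintro ⟨s, hs, -, y, hy1, hy2⟩
    obtain ⟨p', hp'⟩ := exists_pat ht h2t hs hy1
    obtain ⟨p, hp⟩ := exists_pat ht h2t hx hy2
    exact ⟨⟨p, p', fun i k => (seg b s i).getD (p' i + k) d⟩, hp'.symm.trans hp,
      fun _ _ => rfl⟩
  choose f hf1 hf2 using key
  have inj : Function.Injective f := by
    intro s s' h
    apply Subtype.ext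
    apply eq_of_seg (by omega) s.2.1 s'.2.1
    have e := (hf1 s).trans ((congrArg _ (by rw [h])).trans (hf1 s').symm)
    rw [← h] at e
    have hl : (List.ofFn fun i => delPat b t (seg b s.1 i) ((f s).2.1 i)) =
        (List.ofFn fun i => delPat b t (seg b s'.1 i) ((f s).2.1 i)) := by
      rw [List.eq_iff_flatten_eq]
      refine ⟨e, ?_⟩
      simp only [List.map_ofFn]
      congr 1
      funext i
      exact delPat_length b t _ _ _ (seg_length s.2.1 i) (seg_length s'.2.1 i)
    have hl' := List.ofFn_injective hl
    intro i
    refine delPat_inj b t d _ _ _ (seg_length s.2.1 i) (seg_length s'.2.1 i) (congrFun hl' i) ?_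
    intro k
    have h2 := hf2 s' i k
    rw [← h] at h2
    rw [hf2 s i k, h2]
  have hc := Nat.card_le_card_of_injective f inj
  rw [Nat.card_coe_set_eq] at hc
  refine hc.trans (le_of_eq ?_)
  simp [← pow_mul]
  ring
end
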